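/- Let (D*_1, D*_2) be a random vector with the limiting bidegree distribution \bar f_2, under a power-law layer type distribution. Then as t → ∞, P(D*_1 = t) = (1 + o(1)) c' t^{−(α−2)/(1−β)}, where c' = a b^{(α−2)/(1−β)} (1−β)^{−1} P_{21}^{−1}. -/

import Mathlib

open MeasureTheory ProbabilityTheory Filter
open scoped ENNReal Topology Classical

noncomputable section

/-- The binomial probability mass function `Bin(x,y)(s)`. -/
def binP (x : ℕ) (y : ℝ) (s : ℕ) : ℝ := (x.choose s : ℝ) * y ^ s * (1 - y) ^ (x - s)

/-- Convolution of (mass) functions on `ℕ`. -/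
def conv (f g : ℕ → ℝ) (s : ℕ) : ℝ := ∑ i ∈ Finset.range (s + 1), f i * g (s - i)

/-- Iterated convolution power: `convPow f j` is the `j`-fold convolution of `f`. -/
def convPow (f : ℕ → ℝ) : ℕ → ℕ → ℝ
  | 0 => fun s => if s = 0 then 1 else 0
  | j + 1 => conv f (convPow f j)

/-- The compound Poisson probability mass function `CPoi(lam, f)`, i.e. the law of
`H_1 + ⋯ + H_Λ` where `Λ ~ Poi(lam)` and the `H_k` are i.i.d. with mass function `f`,
independent of `Λ`. -/
def cpoi (lam : ℝ) (f : ℕ → ℝ) (s : ℕ) : ℝ :=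
  ∑' j : ℕ, Real.exp (-lam) * lam ^ j / (j.factorial : ℝ) * convPow f j s

/-- Convolution of (mass) functions on `ℕ × ℕ`. -/
def conv2 (F G : ℕ → ℕ → ℝ) (s t : ℕ) : ℝ :=
  ∑ i ∈ Finset.range (s + 1), ∑ j ∈ Finset.range (t + 1), F i j * G (s - i) (t - j)

/-- Point mass at `(1,1)`, as a mass function on `ℕ × ℕ`. -/
def delta11 (s t : ℕ) : ℝ := if s = 1 ∧ t = 1 then 1 else 0

/-- The cross moment `P_{rs} = E[(X)_r Y^s]` for the layer type distribution
`P(dx,dy) = p(dx) δ_{q(x)}(dy)`. -/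
def mom (p q : ℕ → ℝ) (r s : ℕ) : ℝ :=
  ∑' x : ℕ, (x.descFactorial r : ℝ) * q x ^ s * p x

/-- The increment distribution `g(s) = ∫ Bin(x-1,y)(s) x P(dx,dy) / P₁₀` for
`P(dx,dy) = p(dx) δ_{q(x)}(dy)`. -/
def gInc (p q : ℕ → ℝ) (s : ℕ) : ℝ :=
  (∑' x : ℕ, (x : ℝ) * binP (x - 1) (q x) s * p x) / mom p q 1 0

/-- The limiting degree distribution `\bar f₁ = CPoi(μ P₁₀, g)`. -/
def barf1 (mu : ℝ) (p q : ℕ → ℝ) (s : ℕ) : ℝ :=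
  cpoi (mu * mom p q 1 0) (gInc p q) s

/-- The distribution `f₂'` of `(D₁', D₂')`:
`f₂'(s,t) = ∫ Bin(x-2,y)(s) Bin(x-2,y)(t) (x)₂ y P(dx,dy) / P₂₁` for
`P(dx,dy) = p(dx) δ_{q(x)}(dy)`. -/
def f2p (p q : ℕ → ℝ) (s t : ℕ) : ℝ :=
  (∑' x : ℕ, (x.descFactorial 2 : ℝ) * q x * binP (x - 2) (q x) s * binP (x - 2) (q x) t * p x) /
    mom p q 2 1

/-- The limiting bidegree distribution `\bar f₂ = δ₍₁,₁₎ ∗ (\bar f₁ ⊗ \bar f₁) ∗ f₂'`,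
i.e. the joint law of `(D₁*, D₂*) = (1 + D₁ + D₁', 1 + D₂ + D₂')` where `D₁`, `D₂`,
`(D₁', D₂')` are mutually independent, `D₁, D₂ ~ \bar f₁` and `(D₁', D₂') ~ f₂'`. -/
def barf2 (mu : ℝ) (p q : ℕ → ℝ) : ℕ → ℕ → ℝ :=
  conv2 (conv2 delta11 fun s t => barf1 mu p q s * barf1 mu p q t) (f2p p q)

/-- `δ_t = t^{1/2} ln⁴(2+t)`. -/
def deltaFn (t : ℕ) : ℝ := Real.sqrt t * Real.log (2 + (t : ℝ)) ^ (4 : ℕ)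

/-!
Size biasing makes `D₁'` the dominant part of `D₁*`. Its mass function at `t` is, up to
normalisation, `∑ F n * Q n * P(Bin(n, Q n) = t)` with `Q n = q (n + 2)` and
`F n = (n + 2) (n + 1) p (n + 2)`. The weights `Q n * P(Bin(n, Q n) = t)` sum to about
`(1 - β)⁻¹`: raising `n` at fixed success probability `Q n` lowers the distribution function of
`Bin(n, Q n)` at `t` by exactly this weight, the simultaneous decrease of `Q` gives back the
fraction `β` of it, and the distribution functions telescope from `1` to `0`. By Chernoff bounds
the weights live where `n * Q n ≈ t`, and there `F n ≈ a * b ^ γ * t ^ (-γ)` with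
`γ = (α - 2) / (1 - β)`.

The increment mass function of the compound Poisson variable `D₁` at `s + 1` is the mass function of
`D₁'` at `s` times a constant over `s + 1`, so its tail is lighter by one power of `t`. Compound
Poisson sums and convolutions preserve such polynomial bounds, hence `D₁` does not contribute.
-/

/-! ### The binomial distribution -/

section Binomial

variable {n t : ℕ} {y : ℝ}

lemma binP_nonneg (hy : y ∈ Set.Icc (0 : ℝ) 1) (n s : ℕ) : 0 ≤ binP n y s := by
  have : 0 ≤ 1 - y := sub_nonneg.2 hy.2
  have := hy.1
  unfold binP
  positivity

lemma binP_eq_zero_of_lt {s : ℕ} (y : ℝ) (h : n < s) : binP n y s = 0 := by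
  simp [binP, Nat.choose_eq_zero_of_lt h]

lemma hasSum_binP_mul_pow (n : ℕ) (y z : ℝ) :
    HasSum (fun s => binP n y s * z ^ s) ((1 + y * (z - 1)) ^ n) := by
  have hfin : ∑ s ∈ Finset.range (n + 1), binP n y s * z ^ s = (1 + y * (z - 1)) ^ n := by
    rw [show 1 + y * (z - 1) = y * z + (1 - y) by ring, add_pow]
    refine Finset.sum_congr rfl fun s _ => ?_
    rw [binP, mul_pow]
    ring
  rw [← hfin]
  refine hasSum_sum_of_ne_finset_zero fun s hs => ?_
  rw [binP_eq_zero_of_lt y (by simpa [Nat.lt_succ_iff] using hs), zero_mul]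

lemma hasSum_binP (n : ℕ) (y : ℝ) : HasSum (binP n y) 1 := by
  simpa using hasSum_binP_mul_pow n y 1

lemma binP_le_one (hy : y ∈ Set.Icc (0 : ℝ) 1) (n s : ℕ) : binP n y s ≤ 1 :=
  le_hasSum (hasSum_binP n y) s fun j _ => binP_nonneg hy n j

lemma succ_mul_binP_succ (n k : ℕ) (y : ℝ) :
    (k + 1 : ℝ) * binP (n + 1) y (k + 1) = (n + 1) * y * binP n y k := by
  have h : ((n + 1).choose (k + 1) : ℝ) * (k + 1) = (n + 1) * n.choose k := by
    exact_mod_cast (Nat.add_one_mul_choose_eq n k).symm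
  rw [binP, binP, Nat.add_sub_add_right, pow_succ]
  linear_combination y ^ k * y * (1 - y) ^ (n - k) * h

lemma binP_succ_succ (n : ℕ) (y : ℝ) (s : ℕ) :
    binP (n + 1) y (s + 1) = y * binP n y s + (1 - y) * binP n y (s + 1) := by
  rcases lt_or_ge s n with h | h
  · obtain ⟨k, rfl⟩ := Nat.exists_eq_add_of_lt h
    simp only [binP, Nat.choose_succ_succ, show s + k + 1 + 1 - (s + 1) = k + 1 by lia,
      show s + k + 1 - s = k + 1 by lia, show s + k + 1 - (s + 1) = k by lia]
    push_cast
    ring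
  · rw [binP_eq_zero_of_lt y (Nat.lt_succ_of_le h), mul_zero, add_zero]
    simp only [binP, Nat.choose_succ_succ, Nat.choose_eq_zero_of_lt (Nat.lt_succ_of_le h),
      Nat.add_sub_add_right, add_zero]
    ring

/-- The distribution function `P(Bin(n, y) ≤ t)` of the binomial distribution. -/
def binCDF (n : ℕ) (y : ℝ) (t : ℕ) : ℝ := ∑ s ∈ Finset.range (t + 1), binP n y s

lemma binCDF_succ (n : ℕ) (y : ℝ) (t : ℕ) :
    binCDF n y (t + 1) = binCDF n y t + binP n y (t + 1) :=
  Finset.sum_range_succ _ _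

lemma binCDF_nonneg (hy : y ∈ Set.Icc (0 : ℝ) 1) (n t : ℕ) : 0 ≤ binCDF n y t :=
  Finset.sum_nonneg fun s _ => binP_nonneg hy n s

lemma binCDF_le_one (hy : y ∈ Set.Icc (0 : ℝ) 1) (n t : ℕ) : binCDF n y t ≤ 1 :=
  sum_le_hasSum _ (fun s _ => binP_nonneg hy n s) (hasSum_binP n y)

lemma one_add_mul_exp_sub_one_pow_le (n : ℕ) (hy : y ∈ Set.Icc (0 : ℝ) 1) {l : ℝ}
    (hl : |l| ≤ 1) : (1 + y * (Real.exp l - 1)) ^ n ≤ Real.exp (n * y * (l + l ^ 2)) := by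
  have hquad : Real.exp l - 1 ≤ l + l ^ 2 := by
    linarith [(abs_le.1 (Real.abs_exp_sub_one_sub_id_le hl)).2]
  have hbase : 0 ≤ 1 + y * (Real.exp l - 1) := by nlinarith [hy.1, hy.2, Real.exp_pos l]
  calc (1 + y * (Real.exp l - 1)) ^ n
      ≤ Real.exp (y * (l + l ^ 2)) ^ n := by
        refine pow_le_pow_left₀ hbase ?_ n
        linarith [Real.add_one_le_exp (y * (l + l ^ 2)), mul_le_mul_of_nonneg_left hquad hy.1]
    _ = Real.exp (n * y * (l + l ^ 2)) := by rw [← Real.exp_nat_mul, mul_assoc]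

lemma le_exp_of_mul_exp_pow_le {x l : ℝ}
    (h : x * Real.exp l ^ t ≤ Real.exp (n * y * (l + l ^ 2))) :
    x ≤ Real.exp (l * (n * y - t) + l ^ 2 * (n * y)) := by
  rw [← Real.exp_nat_mul, ← le_div_iff₀ (Real.exp_pos _), ← Real.exp_sub] at h
  exact h.trans_eq (by congr 1; ring)

lemma binP_le_exp (hy : y ∈ Set.Icc (0 : ℝ) 1) (n t : ℕ) {l : ℝ} (hl : |l| ≤ 1) :
    binP n y t ≤ Real.exp (l * (n * y - t) + l ^ 2 * (n * y)) := by
  refine le_exp_of_mul_exp_pow_le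
    (le_trans ?_ (one_add_mul_exp_sub_one_pow_le n hy hl))
  exact le_hasSum (hasSum_binP_mul_pow n y _) t fun s _ =>
    mul_nonneg (binP_nonneg hy n s) (by positivity)

lemma one_sub_binCDF_le_exp (hy : y ∈ Set.Icc (0 : ℝ) 1) (n t : ℕ) {l : ℝ} (hl0 : 0 ≤ l)
    (hl1 : l ≤ 1) :
    1 - binCDF n y t ≤ Real.exp (l * (n * y - t) + l ^ 2 * (n * y)) := by
  refine le_exp_of_mul_exp_pow_le (le_trans ?_
    (one_add_mul_exp_sub_one_pow_le n hy (abs_le.2 ⟨by linarith, hl1⟩)))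
  have hhead : HasSum (fun s => if s ∈ Finset.range (t + 1) then binP n y s else 0)
      (binCDF n y t) := by
    rw [binCDF, ← Finset.sum_congr rfl fun s hs => if_pos hs]
    exact hasSum_sum_of_ne_finset_zero fun s hs => if_neg hs
  refine hasSum_le (fun s => ?_) (((hasSum_binP n y).sub hhead).mul_right _)
    (hasSum_binP_mul_pow n y _)
  have hB := binP_nonneg hy n s
  split_ifs with hs
  · simp only [sub_self, zero_mul]
    positivity
  · rw [sub_zero]
    exact mul_le_mul_of_nonneg_left
      (pow_le_pow_right₀ (Real.one_le_exp hl0) (by simp at hs; lia)) hB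

lemma binP_le_exp_of_mul_add_le_abs_sub (hy : y ∈ Set.Icc (0 : ℝ) 1) {ε : ℝ} (hε0 : 0 ≤ ε)
    (hε2 : ε ≤ 2) (h : ε * (n * y + t) ≤ |n * y - t|) :
    binP n y t ≤ Real.exp (-(ε ^ 2 / 4) * (n * y + t)) := by
  have ht : (0 : ℝ) ≤ t := t.cast_nonneg
  rcases le_total (n * y) t with hle | hle
  · rw [abs_of_nonpos (sub_nonpos.2 hle)] at h
    refine (binP_le_exp hy n t (l := ε / 2) (abs_le.2 ⟨by linarith, by linarith⟩)).trans
      (Real.exp_le_exp.2 ?_)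
    nlinarith [mul_le_mul_of_nonneg_left h hε0, mul_nonneg (sq_nonneg ε) ht]
  · rw [abs_of_nonneg (sub_nonneg.2 hle)] at h
    refine (binP_le_exp hy n t (l := -(ε / 2)) (abs_le.2 ⟨by linarith, by linarith⟩)).trans
      (Real.exp_le_exp.2 ?_)
    nlinarith [mul_le_mul_of_nonneg_left h hε0, mul_nonneg (sq_nonneg ε) ht]

lemma binCDF_sub_binCDF_succ (n : ℕ) (y : ℝ) (t : ℕ) :
    binCDF n y t - binCDF (n + 1) y t = y * binP n y t := by
  induction t with
  | zero =>
    simp only [binCDF, binP, zero_add, Finset.sum_range_one, Nat.choose_zero_right, pow_zero,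
      Nat.sub_zero]
    push_cast
    ring
  | succ t ih =>
    rw [binCDF_succ, binCDF_succ, binP_succ_succ]
    linarith

lemma hasDerivAt_binCDF_succ (n t : ℕ) (y : ℝ) :
    HasDerivAt (fun y => binCDF (n + 1) y t) (-((n + 1) * binP n y t)) y := by
  have hbern : ∀ (n s : ℕ) (y : ℝ), binP n y s = (bernsteinPolynomial ℝ n s).eval y := by
    simp [binP, bernsteinPolynomial]
  have hderiv : ∀ s, HasDerivAt (fun y => binP (n + 1) y s)
      ((Polynomial.derivative (bernsteinPolynomial ℝ (n + 1) s)).eval y) y := fun s => by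
    simpa only [hbern] using Polynomial.hasDerivAt _ _
  induction t with
  | zero =>
    simp only [binCDF, zero_add, Finset.sum_range_one]
    refine (hderiv 0).congr_deriv ?_
    rw [bernsteinPolynomial.derivative_zero]
    simp only [hbern, Nat.cast_add, Nat.cast_one, Nat.add_sub_cancel, Polynomial.eval_mul,
      Polynomial.eval_add, Polynomial.eval_neg, Polynomial.eval_one, Polynomial.eval_natCast]
    ring
  | succ t ih =>
    simp only [binCDF_succ]
    refine (ih.add (hderiv (t + 1))).congr_deriv ?_
    rw [bernsteinPolynomial.derivative_succ]
    simp only [hbern, Nat.cast_add, Nat.cast_one, Nat.add_sub_cancel, Polynomial.eval_mul,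
      Polynomial.eval_add, Polynomial.eval_sub, Polynomial.eval_one, Polynomial.eval_natCast]
    ring

lemma exists_binCDF_succ_sub_eq (n t : ℕ) {r s : ℝ} (hrs : r ≤ s) :
    ∃ u ∈ Set.Icc r s,
      binCDF (n + 1) r t - binCDF (n + 1) s t = (n + 1) * (s - r) * binP n u t := by
  rcases hrs.eq_or_lt with rfl | hlt
  · exact ⟨r, Set.left_mem_Icc.2 le_rfl, by ring⟩
  obtain ⟨u, hu, hslope⟩ := exists_hasDerivAt_eq_slope (fun y => binCDF (n + 1) y t) _ hlt
    (fun y _ => (hasDerivAt_binCDF_succ n t y).continuousAt.continuousWithinAt)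
    fun y _ => hasDerivAt_binCDF_succ n t y
  rw [eq_div_iff (sub_pos.2 hlt).ne'] at hslope
  exact ⟨u, Set.Ioo_subset_Icc_self hu, by linarith⟩

lemma binP_mul_one_sub_le (n t : ℕ) {r s : ℝ} (hr : 0 < r) (hrs : r ≤ s) (hs : s ≤ 1) :
    binP n s t * (1 - t * (1 - r / s)) ≤ binP n r t := by
  have hs0 : 0 < s := hr.trans_le hrs
  have hbernoulli : 1 - t * (1 - r / s) ≤ (r / s) ^ t := by
    have h := one_add_mul_le_pow (a := r / s - 1) (by linarith [div_pos hr hs0]) t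
    rw [add_sub_cancel] at h
    linarith
  calc binP n s t * (1 - t * (1 - r / s))
      ≤ binP n s t * (r / s) ^ t :=
        mul_le_mul_of_nonneg_left hbernoulli (binP_nonneg ⟨hs0.le, hs⟩ n t)
    _ = n.choose t * r ^ t * (1 - s) ^ (n - t) := by
        rw [binP, div_pow]
        field_simp
    _ ≤ binP n r t := by
        rw [binP]
        have : 0 ≤ 1 - s := sub_nonneg.2 hs
        gcongr

lemma binP_le_mul_exp (n t : ℕ) {r s : ℝ} (hr : 0 ≤ r) (hrs : r ≤ s) (hs : s < 1) :
    binP n r t ≤ binP n s t * Real.exp (n * (s - r) / (1 - s)) := by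
  have hs1 : 0 < 1 - s := sub_pos.2 hs
  have : 0 ≤ (s - r) / (1 - s) := div_nonneg (sub_nonneg.2 hrs) hs1.le
  have hbase : 1 - r ≤ (1 - s) * Real.exp ((s - r) / (1 - s)) := calc
    1 - r = (1 - s) * ((s - r) / (1 - s) + 1) := by field_simp; ring
    _ ≤ _ := mul_le_mul_of_nonneg_left (Real.add_one_le_exp _) hs1.le
  have hpow : (1 - r) ^ (n - t) ≤ (1 - s) ^ (n - t) * Real.exp (n * (s - r) / (1 - s)) := calc
    (1 - r) ^ (n - t) ≤ ((1 - s) * Real.exp ((s - r) / (1 - s))) ^ (n - t) :=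
        pow_le_pow_left₀ (by linarith) hbase _
    _ = (1 - s) ^ (n - t) * Real.exp ((n - t : ℕ) * ((s - r) / (1 - s))) := by
        rw [mul_pow, ← Real.exp_nat_mul]
    _ ≤ _ := by
        rw [mul_div_assoc]
        gcongr
        exact n.sub_le t
  calc binP n r t
      ≤ n.choose t * s ^ t * ((1 - s) ^ (n - t) * Real.exp (n * (s - r) / (1 - s))) := by
        rw [binP]
        have : 0 ≤ (1 - r) ^ (n - t) := pow_nonneg (by linarith) _
        have : 0 ≤ s := hr.trans hrs
        gcongr
    _ = _ := by rw [binP]; ring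

lemma mul_binP_le_binCDF_sub (n t : ℕ) {r s : ℝ} (hr : 0 ≤ r) (hrs : r ≤ s) (hs : s < 1) :
    (s - (n + 1) * (s - r) * Real.exp (n * (s - r) / (1 - s))) * binP n s t ≤
      binCDF n s t - binCDF (n + 1) r t := by
  obtain ⟨u, ⟨hru, hus⟩, hu⟩ := exists_binCDF_succ_sub_eq n t hrs
  have hB : binP n u t ≤ binP n s t * Real.exp (n * (s - r) / (1 - s)) := by
    refine (binP_le_mul_exp n t (hr.trans hru) hus hs).trans ?_
    have := binP_nonneg ⟨hr.trans hrs, hs.le⟩ n t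
    have : 0 < 1 - s := sub_pos.2 hs
    gcongr
  have hc : 0 ≤ (n + 1) * (s - r) := mul_nonneg (by positivity) (sub_nonneg.2 hrs)
  linarith [mul_le_mul_of_nonneg_left hB hc, binCDF_sub_binCDF_succ n s t]

lemma binCDF_sub_le_mul_binP (n t : ℕ) {r s : ℝ} (hr : 0 < r) (hrs : r ≤ s) (hs : s ≤ 1) :
    binCDF n s t - binCDF (n + 1) r t ≤
      (s - (n + 1) * (s - r) * (1 - t * (1 - r / s))) * binP n s t := by
  obtain ⟨u, ⟨hru, hus⟩, hu⟩ := exists_binCDF_succ_sub_eq n t hrs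
  have hs0 : 0 < s := hr.trans_le hrs
  have hB : binP n s t * (1 - t * (1 - r / s)) ≤ binP n u t := by
    refine le_trans ?_ (binP_mul_one_sub_le n t (hr.trans_le hru) hus hs)
    have := binP_nonneg ⟨hs0.le, hs⟩ n t
    gcongr
  have hc : 0 ≤ (n + 1) * (s - r) := mul_nonneg (by positivity) (sub_nonneg.2 hrs)
  linarith [mul_le_mul_of_nonneg_left hB hc, binCDF_sub_binCDF_succ n s t]

end Binomial

/-! ### Series -/

section Series

variable {f w : ℕ → ℝ} {c : ℝ}

lemma mul_sum_range_le_of_mul_le_sub_succ (hf : ∀ n, 0 ≤ f n)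
    (h : ∀ n, c * w n ≤ f n - f (n + 1)) (n : ℕ) : c * ∑ i ∈ Finset.range n, w i ≤ f 0 := calc
  c * ∑ i ∈ Finset.range n, w i ≤ ∑ i ∈ Finset.range n, (f i - f (i + 1)) := by
      rw [Finset.mul_sum]
      exact Finset.sum_le_sum fun i _ => h i
  _ ≤ f 0 := by
      rw [Finset.sum_range_sub']
      linarith [hf n]

lemma summable_of_mul_le_sub_succ (hc : 0 < c) (hw : ∀ n, 0 ≤ w n) (hf : ∀ n, 0 ≤ f n)
    (h : ∀ n, c * w n ≤ f n - f (n + 1)) : Summable w :=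
  summable_of_sum_range_le (c := f 0 / c) hw fun n => by
    rw [le_div_iff₀' hc]
    exact mul_sum_range_le_of_mul_le_sub_succ hf h n

lemma mul_tsum_le_of_mul_le_sub_succ (hw : Summable w) (hf : ∀ n, 0 ≤ f n)
    (h : ∀ n, c * w n ≤ f n - f (n + 1)) : c * ∑' n, w n ≤ f 0 :=
  le_of_tendsto' (hw.hasSum.tendsto_sum_nat.const_mul c)
    (mul_sum_range_le_of_mul_le_sub_succ hf h)

lemma le_mul_tsum_of_sub_succ_le (hw : Summable w) (hf : Tendsto f atTop (𝓝 0))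
    (h : ∀ n, f n - f (n + 1) ≤ c * w n) : f 0 ≤ c * ∑' n, w n := by
  refine le_of_tendsto_of_tendsto' (by simpa using hf.const_sub (f 0))
    (hw.hasSum.tendsto_sum_nat.const_mul c) fun n => ?_
  rw [← Finset.sum_range_sub', Finset.mul_sum]
  exact Finset.sum_le_sum fun i _ => h i

lemma abs_tsum_mul_sub_mul_tsum_le {G e : ℕ → ℝ} {A : ℝ} (hw : Summable w) (hw0 : ∀ n, 0 ≤ w n)
    (he : Summable e) (h : ∀ n, |G n - A| * w n ≤ e n) :
    |∑' n, G n * w n - A * ∑' n, w n| ≤ ∑' n, e n := by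
  have hnorm : ∀ n, ‖G n * w n - A * w n‖ ≤ e n := fun n => by
    rw [← sub_mul, norm_mul, Real.norm_eq_abs, Real.norm_of_nonneg (hw0 n)]
    exact h n
  have hG : Summable fun n => G n * w n := by
    simpa only [sub_add_cancel] using
      (Summable.of_norm_bounded he hnorm).add (hw.mul_left A)
  rw [← tsum_mul_left, ← hG.tsum_sub (hw.mul_left A)]
  exact tsum_of_norm_bounded he.hasSum hnorm

lemma tsum_nat_add_of_eq_zero {N : ℕ} (h : ∀ n < N, w n = 0) :
    ∑' n, w (n + N) = ∑' n, w n := by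
  refine (add_left_injective N).tsum_eq fun n hn => ⟨n - N, Nat.sub_add_cancel ?_⟩
  exact not_lt.1 fun hlt => hn (h n hlt)

lemma tendsto_add_div_add (c d : ℝ) :
    Tendsto (fun n : ℕ => ((n : ℝ) + c) / (n + d)) atTop (𝓝 1) := by
  simpa [add_comm] using tendsto_add_mul_div_add_mul_atTop_nhds c d (1 : ℝ) one_ne_zero

end Series

/-! ### Binomial averages along a regularly decaying sequence -/

/-- A sequence of success probabilities that behaves like `n ^ (-β)`: its relative decrement is
asymptotic to `β / n`. The last three conditions keep the variance of `Bin(n, Q n)` of the order of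
its mean, make the mean change slowly, and make it diverge. -/
structure RegularlyDecaying (Q : ℕ → ℝ) (β : ℝ) : Prop where
  pos : ∀ n, 0 < Q n
  le_one : ∀ n, Q n ≤ 1
  antitone : Antitone Q
  tendsto_ratio : Tendsto (fun n : ℕ => (n + 1) * (Q n - Q (n + 1)) / Q n) atTop (𝓝 β)
  eventually_le : ∃ c < 1, ∀ᶠ n in atTop, Q n ≤ c
  tendsto_decrement : Tendsto (fun n : ℕ => (n + 1) * (Q n - Q (n + 1))) atTop (𝓝 0)
  tendsto_mean : Tendsto (fun n : ℕ => n * Q n) atTop atTop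

/-- The weight `Q n * P(Bin(n, Q n) = t)`. For fixed large `t` it is concentrated on those `n` for
which `n * Q n` is close to `t`. -/
def binWeight (Q : ℕ → ℝ) (t n : ℕ) : ℝ := Q n * binP n (Q n) t

namespace RegularlyDecaying

variable {Q : ℕ → ℝ} {β : ℝ}

lemma mem_Icc (hQ : RegularlyDecaying Q β) (n : ℕ) : Q n ∈ Set.Icc (0 : ℝ) 1 :=
  ⟨(hQ.pos n).le, hQ.le_one n⟩

lemma binWeight_nonneg (hQ : RegularlyDecaying Q β) (t n : ℕ) : 0 ≤ binWeight Q t n :=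
  mul_nonneg (hQ.pos n).le (binP_nonneg (hQ.mem_Icc n) n t)

lemma eventually_mul_binWeight_le (hQ : RegularlyDecaying Q β) {κ : ℝ} (hκ : κ < 1 - β) :
    ∀ᶠ n in atTop, ∀ t, κ * binWeight Q t n ≤
      binCDF n (Q n) t - binCDF (n + 1) (Q (n + 1)) t := by
  obtain ⟨c, hc, hQc⟩ := hQ.eventually_le
  have hlim : Tendsto (fun n : ℕ => 1 - (n + 1) * (Q n - Q (n + 1)) / Q n *
      Real.exp ((n + 1) * (Q n - Q (n + 1)) / (1 - c))) atTop (𝓝 (1 - β)) := by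
    simpa using (hQ.tendsto_ratio.mul (hQ.tendsto_decrement.div_const (1 - c)).rexp).const_sub 1
  filter_upwards [hlim.eventually_const_lt hκ, hQc] with n hn hcn t
  have hQn := hQ.pos n
  have hB := binP_nonneg (hQ.mem_Icc n) n t
  have hd : 0 ≤ Q n - Q (n + 1) := sub_nonneg.2 (hQ.antitone n.le_succ)
  have hexp : (n : ℝ) * (Q n - Q (n + 1)) / (1 - Q n) ≤ (n + 1) * (Q n - Q (n + 1)) / (1 - c) := by
    have : 0 < 1 - c := sub_pos.2 hc
    gcongr
    linarith
  calc κ * binWeight Q t n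
      ≤ (1 - (n + 1) * (Q n - Q (n + 1)) / Q n *
          Real.exp ((n + 1) * (Q n - Q (n + 1)) / (1 - c))) * binWeight Q t n :=
        mul_le_mul_of_nonneg_right hn.le (hQ.binWeight_nonneg t n)
    _ = (Q n - (n + 1) * (Q n - Q (n + 1)) *
          Real.exp ((n + 1) * (Q n - Q (n + 1)) / (1 - c))) * binP n (Q n) t := by
        rw [binWeight]
        field_simp
    _ ≤ (Q n - (n + 1) * (Q n - Q (n + 1)) *
          Real.exp (n * (Q n - Q (n + 1)) / (1 - Q n))) * binP n (Q n) t := by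
        gcongr
    _ ≤ _ := mul_binP_le_binCDF_sub n t (hQ.pos _).le (hQ.antitone n.le_succ) (hcn.trans_lt hc)

lemma eventually_le_mul_binWeight (hQ : RegularlyDecaying Q β) {κ : ℝ} (hκ : 1 - β < κ) :
    ∀ᶠ n : ℕ in atTop, ∀ t : ℕ, t ≤ 2 * (n * Q n) →
      binCDF n (Q n) t - binCDF (n + 1) (Q (n + 1)) t ≤ κ * binWeight Q t n := by
  have hlim : Tendsto (fun n : ℕ => 1 - (n + 1) * (Q n - Q (n + 1)) / Q n *
      (1 - 2 * ((n + 1) * (Q n - Q (n + 1))))) atTop (𝓝 (1 - β)) := by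
    simpa using (hQ.tendsto_ratio.mul ((hQ.tendsto_decrement.const_mul 2).const_sub 1)).const_sub 1
  filter_upwards [hlim.eventually_lt_const hκ] with n hn t ht
  have hQn := hQ.pos n
  have hB := binP_nonneg (hQ.mem_Icc n) n t
  have hd : 0 ≤ Q n - Q (n + 1) := sub_nonneg.2 (hQ.antitone n.le_succ)
  have hgap : t * (1 - Q (n + 1) / Q n) ≤ 2 * ((n + 1) * (Q n - Q (n + 1))) := calc
    t * (1 - Q (n + 1) / Q n) = t * (Q n - Q (n + 1)) / Q n := by field_simp
    _ ≤ 2 * (n * Q n) * (Q n - Q (n + 1)) / Q n := by gcongr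
    _ = 2 * (n * (Q n - Q (n + 1))) := by field_simp
    _ ≤ _ := by gcongr; linarith
  calc binCDF n (Q n) t - binCDF (n + 1) (Q (n + 1)) t
      ≤ (Q n - (n + 1) * (Q n - Q (n + 1)) * (1 - t * (1 - Q (n + 1) / Q n))) * binP n (Q n) t :=
        binCDF_sub_le_mul_binP n t (hQ.pos _) (hQ.antitone n.le_succ) (hQ.le_one n)
    _ ≤ (Q n - (n + 1) * (Q n - Q (n + 1)) * (1 - 2 * ((n + 1) * (Q n - Q (n + 1))))) *
          binP n (Q n) t := by gcongr
    _ = (1 - (n + 1) * (Q n - Q (n + 1)) / Q n * (1 - 2 * ((n + 1) * (Q n - Q (n + 1))))) *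
          binWeight Q t n := by
        rw [binWeight]
        field_simp
    _ ≤ κ * binWeight Q t n := mul_le_mul_of_nonneg_right hn.le (hQ.binWeight_nonneg t n)

lemma tendsto_binCDF_zero (hQ : RegularlyDecaying Q β) (t : ℕ) :
    Tendsto (fun n => binCDF n (Q n) t) atTop (𝓝 0) := by
  rw [← Finset.sum_const_zero (s := Finset.range (t + 1))]
  refine tendsto_finsetSum _ fun s _ => ?_
  have hlim : Tendsto (fun n : ℕ => Real.exp (s / 2 - 1 / 4 * (n * Q n))) atTop (𝓝 0) :=
    Real.tendsto_exp_atBot.comp (tendsto_atBot_add_const_left _ _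
      (tendsto_neg_atTop_atBot.comp (hQ.tendsto_mean.const_mul_atTop (by norm_num))))
  refine squeeze_zero (fun n => binP_nonneg (hQ.mem_Icc n) n s) (fun n => ?_) hlim
  refine (binP_le_exp (hQ.mem_Icc n) n s (l := -(1 / 2)) (by norm_num [abs_le])).trans_eq ?_
  congr 1
  ring

lemma summable_binWeight (hQ : RegularlyDecaying Q β) (hβ : β < 1) (t : ℕ) :
    Summable (binWeight Q t) := by
  obtain ⟨N, hN⟩ := eventually_atTop.1
    (hQ.eventually_mul_binWeight_le (κ := (1 - β) / 2) (by linarith))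
  refine (summable_nat_add_iff N).1 (summable_of_mul_le_sub_succ
    (f := fun n => binCDF (n + N) (Q (n + N)) t) (by linarith : 0 < (1 - β) / 2)
    (fun n => hQ.binWeight_nonneg t _) (fun n => binCDF_nonneg (hQ.mem_Icc _) _ t) fun n => ?_)
  rw [Nat.add_right_comm]
  exact hN (n + N) (Nat.le_add_left N n) t

lemma eventually_mul_tsum_binWeight_le_one (hQ : RegularlyDecaying Q β) (hβ : β < 1) {κ : ℝ}
    (hκ : κ < 1 - β) : ∀ᶠ t in atTop, κ * ∑' n, binWeight Q t n ≤ 1 := by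
  obtain ⟨N, hN⟩ := eventually_atTop.1 (hQ.eventually_mul_binWeight_le hκ)
  filter_upwards [eventually_ge_atTop N] with t ht
  rw [← tsum_nat_add_of_eq_zero (N := N) fun n hn => by
    rw [binWeight, binP_eq_zero_of_lt _ (hn.trans_le ht), mul_zero]]
  refine (mul_tsum_le_of_mul_le_sub_succ (f := fun n => binCDF (n + N) (Q (n + N)) t)
    ((summable_nat_add_iff N).2 (hQ.summable_binWeight hβ t))
    (fun n => binCDF_nonneg (hQ.mem_Icc _) _ t) fun n => ?_).trans
    (binCDF_le_one (hQ.mem_Icc _) _ t)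
  rw [Nat.add_right_comm]
  exact hN (n + N) (Nat.le_add_left N n) t

lemma exists_mean_threshold (hQ : RegularlyDecaying Q β) {t : ℕ} (ht : 4 ≤ t) :
    ∃ L : ℕ, t ≤ 2 * L ∧ L * Q L ≤ 3 / 4 * t ∧ ∀ n : ℕ, L ≤ n → t ≤ 2 * (n * Q n) := by
  have hex : ∃ L : ℕ, ∀ n : ℕ, L ≤ n → t ≤ 2 * (n * Q n) :=
    eventually_atTop.1 ((hQ.tendsto_mean.const_mul_atTop two_pos).eventually_ge_atTop (t : ℝ))
  have hL := Nat.find_spec hex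
  have hmin := fun m => Nat.find_min hex (m := m)
  generalize Nat.find hex = L at hL hmin
  have hLt : t ≤ 2 * L := by
    have : (t : ℝ) ≤ 2 * L := (hL L le_rfl).trans <| mul_le_mul_of_nonneg_left
      (mul_le_of_le_one_right L.cast_nonneg (hQ.le_one L)) zero_le_two
    exact_mod_cast this
  obtain ⟨M, rfl⟩ : ∃ M, L = M + 1 := ⟨L - 1, by lia⟩
  have hM : 2 * (M * Q M) < t := by
    by_contra! hMt
    refine hmin M M.lt_succ_self fun n hn => ?_
    rcases hn.eq_or_lt with rfl | hlt
    exacts [hMt, hL n hlt]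
  refine ⟨M + 1, hLt, ?_, hL⟩
  have ht' : (4 : ℝ) ≤ t := by exact_mod_cast ht
  calc ((M + 1 : ℕ) : ℝ) * Q (M + 1) = M * Q (M + 1) + Q (M + 1) := by push_cast; ring
    _ ≤ M * Q M + 1 := by
        gcongr
        exacts [hQ.antitone M.le_succ, hQ.le_one _]
    _ ≤ 3 / 4 * t := by linarith

lemma eventually_le_mul_tsum_binWeight (hQ : RegularlyDecaying Q β) (hβ : β < 1) {κ : ℝ}
    (hκ : 1 - β < κ) :
    ∀ᶠ t : ℕ in atTop, 1 - Real.exp (-(5 / 256) * t) ≤ κ * ∑' n, binWeight Q t n := by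
  obtain ⟨N, hN⟩ := eventually_atTop.1 (hQ.eventually_le_mul_binWeight hκ)
  filter_upwards [eventually_ge_atTop 4, eventually_ge_atTop (2 * N)] with t ht4 htN
  obtain ⟨L, htL, hmean, hL⟩ := hQ.exists_mean_threshold ht4
  have hw := hQ.summable_binWeight hβ t
  have htail : 1 - binCDF L (Q L) t ≤ Real.exp (-(5 / 256) * t) := by
    refine (one_sub_binCDF_le_exp (hQ.mem_Icc L) L t (l := 1 / 8) (by norm_num)
      (by norm_num)).trans (Real.exp_le_exp.2 ?_)
    linarith
  have htele : binCDF L (Q L) t ≤ κ * ∑' n, binWeight Q t (n + L) := by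
    have h := le_mul_tsum_of_sub_succ_le (f := fun n => binCDF (n + L) (Q (n + L)) t) (c := κ)
      ((summable_nat_add_iff L).2 hw)
      ((tendsto_add_atTop_iff_nat L).2 (hQ.tendsto_binCDF_zero t)) fun n => by
        rw [Nat.add_right_comm]
        exact hN (n + L) (by lia) t (hL _ (Nat.le_add_left L n))
    rwa [zero_add] at h
  have hshift : ∑' n, binWeight Q t (n + L) ≤ ∑' n, binWeight Q t n := by
    rw [← hw.sum_add_tsum_nat_add L]
    exact le_add_of_nonneg_left (Finset.sum_nonneg fun n _ => hQ.binWeight_nonneg t n)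
  linarith [mul_le_mul_of_nonneg_left hshift (by linarith : 0 ≤ κ)]

theorem tendsto_tsum_binWeight (hQ : RegularlyDecaying Q β) (hβ : β < 1) :
    Tendsto (fun t => ∑' n, binWeight Q t n) atTop (𝓝 (1 - β)⁻¹) := by
  have hβ' : 0 < 1 - β := sub_pos.2 hβ
  have hinv : Tendsto (fun κ : ℝ => κ⁻¹) (𝓝 (1 - β)) (𝓝 (1 - β)⁻¹) := tendsto_inv₀ hβ'.ne'
  refine tendsto_order.2 ⟨fun x hx => ?_, fun x hx => ?_⟩
  · obtain ⟨κ, hxκ, hκ⟩ := (((hinv.eventually_const_lt hx).filter_mono nhdsWithin_le_nhds).and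
      (self_mem_nhdsWithin (s := Set.Ioi (1 - β)))).exists
    have hexp : Tendsto (fun t : ℕ => Real.exp (-(5 / 256) * t)) atTop (𝓝 0) :=
      Real.tendsto_exp_atBot.comp
        (tendsto_natCast_atTop_atTop.const_mul_atTop_of_neg (by norm_num))
    have hlow : Tendsto (fun t : ℕ => κ⁻¹ * (1 - Real.exp (-(5 / 256) * t))) atTop (𝓝 κ⁻¹) := by
      simpa using (hexp.const_sub 1).const_mul κ⁻¹
    filter_upwards [hQ.eventually_le_mul_tsum_binWeight hβ hκ, hlow.eventually_const_lt hxκ]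
      with t ht hxt
    exact hxt.trans_le ((inv_mul_le_iff₀ (hβ'.trans hκ)).2 ht)
  · obtain ⟨κ, ⟨hκx, hκ0⟩, hκ⟩ := ((((hinv.eventually_lt_const hx).and
      (lt_mem_nhds hβ')).filter_mono nhdsWithin_le_nhds).and
      (self_mem_nhdsWithin (s := Set.Iio (1 - β)))).exists
    filter_upwards [hQ.eventually_mul_tsum_binWeight_le_one hβ hκ] with t ht
    rw [← le_div_iff₀' hκ0, one_div] at ht
    exact ht.trans_lt hκx

lemma summable_mul_exp_neg_mean (hQ : RegularlyDecaying Q β) (hβ : β < 1) {c : ℝ} (hc : 0 < c) :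
    Summable fun n : ℕ => Q n * Real.exp (-c * (n * Q n)) := by
  obtain ⟨N, hN⟩ := eventually_atTop.1
    (hQ.tendsto_ratio.eventually_lt_const (by linarith : β < (1 + β) / 2))
  have hδ : 0 < (1 - β) / 2 := by linarith
  refine (summable_nat_add_iff N).1 (summable_of_mul_le_sub_succ
    (f := fun n => Real.exp (-c * ((n + N : ℕ) * Q (n + N))))
    (c := c * ((1 - β) / 2) * Real.exp (-c)) (by positivity)
    (fun n => mul_nonneg (hQ.pos _).le (Real.exp_pos _).le) (fun n => (Real.exp_pos _).le)
    fun n => ?_)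
  rw [Nat.add_right_comm]
  have hstep := hN (n + N) (Nat.le_add_left N n)
  generalize n + N = m at hstep
  rw [div_lt_iff₀ (hQ.pos m)] at hstep
  have hgrow : (1 - β) / 2 * Q m ≤ (m + 1 : ℕ) * Q (m + 1) - m * Q m := by
    push_cast
    linarith
  have hslow : (m + 1 : ℕ) * Q (m + 1) ≤ m * Q m + 1 := by
    push_cast
    nlinarith [hQ.antitone m.le_succ, hQ.le_one (m + 1), (m.cast_nonneg : (0 : ℝ) ≤ m)]
  generalize ((m + 1 : ℕ) : ℝ) * Q (m + 1) = v at hgrow hslow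
  calc c * ((1 - β) / 2) * Real.exp (-c) * (Q m * Real.exp (-c * (m * Q m)))
      = Real.exp (-c * (m * Q m + 1)) * (c * ((1 - β) / 2 * Q m)) := by
        rw [mul_add, Real.exp_add, mul_one]
        ring
    _ ≤ Real.exp (-c * v) * (c * (v - m * Q m)) := by
        refine mul_le_mul (Real.exp_le_exp.2 ?_) (mul_le_mul_of_nonneg_left hgrow hc.le)
          (mul_nonneg hc.le (mul_nonneg hδ.le (hQ.pos m).le)) (Real.exp_pos _).le
        exact mul_le_mul_of_nonpos_left hslow (neg_nonpos.2 hc.le)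
    _ ≤ Real.exp (-c * v) * (Real.exp (c * (v - m * Q m)) - 1) := by
        gcongr
        linarith [Real.add_one_le_exp (c * (v - m * Q m))]
    _ = Real.exp (-c * (m * Q m)) - Real.exp (-c * v) := by
        rw [mul_sub, mul_one, ← Real.exp_add]
        congr 2
        ring

lemma exists_window (hQ : RegularlyDecaying Q β) {F : ℕ → ℝ} {γ A : ℝ}
    (hF : Tendsto (fun n : ℕ => F n * (n * Q n) ^ γ) atTop (𝓝 A)) {η : ℝ} (hη : 0 < η) :
    ∃ ε : ℝ, 0 < ε ∧ ε ≤ 1 / 2 ∧ ∀ᶠ n : ℕ in atTop, ∀ t : ℕ,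
      |n * Q n - t| ≤ ε * (n * Q n + t) → |F n * (t : ℝ) ^ γ - A| ≤ η := by
  have hcont : ContinuousAt (fun u : ℝ × ℝ => u.1 * u.2 ^ γ) (A, 1) :=
    continuousAt_fst.mul (continuousAt_snd.rpow_const (Or.inl one_ne_zero))
  obtain ⟨δ, hδ, hclose⟩ := Metric.continuousAt_iff.1 hcont η hη
  refine ⟨min (δ / 8) (1 / 2), by positivity, min_le_right _ _, ?_⟩
  have hε0 : 0 < min (δ / 8) (1 / 2) := by positivity
  have hεδ := min_le_left (δ / 8) (1 / 2)
  have hε2 := min_le_right (δ / 8) (1 / 2)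
  generalize min (δ / 8) (1 / 2) = ε at *
  filter_upwards [Metric.tendsto_nhds.1 hF δ hδ, hQ.tendsto_mean.eventually_gt_atTop 0]
    with n hn hm t ht
  generalize (n : ℝ) * Q n = m at *
  have ht0 : (0 : ℝ) ≤ t := t.cast_nonneg
  have ht3 : (t : ℝ) ≤ 3 * m := by nlinarith [(abs_le.1 ht).1]
  have hratio : |t / m - 1| < δ := by
    rw [div_sub_one hm.ne', abs_div, abs_of_pos hm, div_lt_iff₀ hm, abs_sub_comm]
    nlinarith
  have h := hclose (x := (F n * m ^ γ, t / m)) (max_lt hn hratio)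
  simp only [Real.one_rpow, mul_one, Real.dist_eq] at h
  rw [Real.div_rpow ht0 hm.le, mul_assoc, mul_div_cancel₀ _ (Real.rpow_pos_of_pos hm γ).ne'] at h
  exact h.le

lemma eventually_abs_le_of_tendsto_mul_mean_rpow (hQ : RegularlyDecaying Q β) {F : ℕ → ℝ}
    {γ A : ℝ} (hγ : 0 ≤ γ) (hF : Tendsto (fun n : ℕ => F n * (n * Q n) ^ γ) atTop (𝓝 A)) :
    ∀ᶠ n in atTop, |F n| ≤ |A| + 1 := by
  filter_upwards [hF.abs.eventually_lt_const (lt_add_one |A|),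
    hQ.tendsto_mean.eventually_ge_atTop 1] with n hn hm
  rw [abs_mul] at hn
  refine (le_mul_of_one_le_right (abs_nonneg _) ?_).trans hn.le
  exact (Real.one_le_rpow hm hγ).trans (le_abs_self _)

-- Inside the window `F n` is close to `A * t ^ (-γ)`; outside it the binomial mass is exponentially
-- small in both `t` and the mean; and `n < t` carries no mass, so only large `n` matter.
lemma exists_abs_sub_mul_binWeight_le (hQ : RegularlyDecaying Q β) {F : ℕ → ℝ} {γ A : ℝ}
    (hγ : 0 ≤ γ) (hF : Tendsto (fun n : ℕ => F n * (n * Q n) ^ γ) atTop (𝓝 A)) {η : ℝ}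
    (hη : 0 < η) :
    ∃ c > 0, ∀ᶠ t : ℕ in atTop, ∀ n : ℕ, |F n * (t : ℝ) ^ γ - A| * binWeight Q t n ≤
      η * binWeight Q t n + ((|A| + 1) * (t : ℝ) ^ γ + |A|) * Real.exp (-c * t) *
        (Q n * Real.exp (-c * (n * Q n))) := by
  obtain ⟨ε, hε0, hε2, hwindow⟩ := hQ.exists_window hF hη
  obtain ⟨N, hN⟩ := eventually_atTop.1
    (hwindow.and (hQ.eventually_abs_le_of_tendsto_mul_mean_rpow hγ hF))
  refine ⟨ε ^ 2 / 4, by positivity, ?_⟩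
  filter_upwards [eventually_ge_atTop N] with t ht n
  have hw := hQ.binWeight_nonneg t n
  have hQn := hQ.pos n
  have htγ : 0 ≤ (t : ℝ) ^ γ := by positivity
  have htail : 0 ≤ ((|A| + 1) * (t : ℝ) ^ γ + |A|) * Real.exp (-(ε ^ 2 / 4) * t) *
      (Q n * Real.exp (-(ε ^ 2 / 4) * (n * Q n))) := by positivity
  rcases lt_or_ge n N with hnN | hnN
  · rw [binWeight, binP_eq_zero_of_lt _ (hnN.trans_le ht)]
    simpa only [mul_zero, zero_add] using htail
  obtain ⟨hclose, hbdd⟩ := hN n hnN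
  rcases le_total |n * Q n - t| (ε * (n * Q n + t)) with hin | hout
  · exact (mul_le_mul_of_nonneg_right (hclose t hin) hw).trans (le_add_of_nonneg_right htail)
  have hF' : |F n * (t : ℝ) ^ γ - A| ≤ (|A| + 1) * (t : ℝ) ^ γ + |A| := by
    refine (abs_sub _ _).trans ?_
    rw [abs_mul, abs_of_nonneg htγ]
    gcongr
  have hB := binP_le_exp_of_mul_add_le_abs_sub (hQ.mem_Icc n) hε0.le (by linarith) hout
  calc |F n * (t : ℝ) ^ γ - A| * binWeight Q t n
      ≤ ((|A| + 1) * (t : ℝ) ^ γ + |A|) *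
          (Q n * Real.exp (-(ε ^ 2 / 4) * (n * Q n + t))) := by
        rw [binWeight] at hw ⊢
        gcongr
    _ = ((|A| + 1) * (t : ℝ) ^ γ + |A|) * Real.exp (-(ε ^ 2 / 4) * t) *
          (Q n * Real.exp (-(ε ^ 2 / 4) * (n * Q n))) := by
        rw [mul_add, Real.exp_add]
        ring
    _ ≤ _ := le_add_of_nonneg_left (mul_nonneg hη.le hw)

lemma eventually_abs_tsum_sub_le (hQ : RegularlyDecaying Q β) (hβ : β < 1)
    {F : ℕ → ℝ} {γ A : ℝ} (hγ : 0 ≤ γ)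
    (hF : Tendsto (fun n : ℕ => F n * (n * Q n) ^ γ) atTop (𝓝 A)) {η : ℝ} (hη : 0 < η) :
    ∀ᶠ t : ℕ in atTop, |(∑' n, F n * binWeight Q t n) * (t : ℝ) ^ γ -
      A * ∑' n, binWeight Q t n| ≤ η * ∑' n, binWeight Q t n + η := by
  obtain ⟨c, hc, hpt⟩ := hQ.exists_abs_sub_mul_binWeight_le hγ hF hη
  have hS := hQ.summable_mul_exp_neg_mean hβ hc
  have herr : Tendsto (fun t : ℕ => ((|A| + 1) * (t : ℝ) ^ γ + |A|) * Real.exp (-c * t) *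
      ∑' n : ℕ, Q n * Real.exp (-c * (n * Q n))) atTop (𝓝 0) := by
    have hpow : ∀ s : ℝ, Tendsto (fun t : ℕ => (t : ℝ) ^ s * Real.exp (-c * t)) atTop (𝓝 0) :=
      fun s => (tendsto_rpow_mul_exp_neg_mul_atTop_nhds_zero s c hc).comp
        tendsto_natCast_atTop_atTop
    have h := (((hpow γ).const_mul (|A| + 1)).add ((hpow 0).const_mul |A|)).mul_const
      (∑' n : ℕ, Q n * Real.exp (-c * (n * Q n)))
    simp only [mul_zero, add_zero, zero_mul, Real.rpow_zero, one_mul] at h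
    exact h.congr fun t => by ring
  filter_upwards [hpt, herr.eventually_le_const hη] with t ht hsmall
  have hw := hQ.summable_binWeight hβ t
  have hmul : (∑' n, F n * binWeight Q t n) * (t : ℝ) ^ γ =
      ∑' n, F n * (t : ℝ) ^ γ * binWeight Q t n := by
    rw [← tsum_mul_right]
    exact tsum_congr fun n => by ring
  rw [hmul]
  refine (abs_tsum_mul_sub_mul_tsum_le hw (hQ.binWeight_nonneg t)
    ((hw.mul_left η).add (hS.mul_left _)) ht).trans ?_
  rw [(hw.mul_left η).tsum_add (hS.mul_left _), tsum_mul_left, tsum_mul_left]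
  exact add_le_add_right hsmall _

theorem tendsto_tsum_mul_binWeight (hQ : RegularlyDecaying Q β) (hβ : β < 1) {F : ℕ → ℝ}
    {γ A : ℝ} (hγ : 0 ≤ γ) (hF : Tendsto (fun n : ℕ => F n * (n * Q n) ^ γ) atTop (𝓝 A)) :
    Tendsto (fun t : ℕ => (∑' n, F n * binWeight Q t n) * (t : ℝ) ^ γ) atTop
      (𝓝 (A * (1 - β)⁻¹)) := by
  have hM := hQ.tendsto_tsum_binWeight hβ
  have hM0 : 0 < (1 - β)⁻¹ + 2 := by linarith [inv_pos.2 (sub_pos.2 hβ)]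
  have hdiff : Tendsto (fun t : ℕ => (∑' n, F n * binWeight Q t n) * (t : ℝ) ^ γ -
      A * ∑' n, binWeight Q t n) atTop (𝓝 0) := by
    refine Metric.tendsto_nhds.2 fun ε hε => ?_
    filter_upwards [hM.eventually_lt_const (lt_add_one _),
      hQ.eventually_abs_tsum_sub_le hβ hγ hF (div_pos hε hM0)] with t hMt ht
    rw [dist_zero_right, Real.norm_eq_abs]
    refine ht.trans_lt ?_
    rw [← mul_add_one, div_mul_eq_mul_div, div_lt_iff₀ hM0]
    exact mul_lt_mul_of_pos_left (by linarith) hε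
  simpa using hdiff.add (hM.const_mul A)

end RegularlyDecaying

/-! ### Convolutions of power laws -/

section Convolution

variable {f g h : ℕ → ℝ} {A B F G γ : ℝ}

lemma conv_nonneg (hf : ∀ i, 0 ≤ f i) (hg : ∀ i, 0 ≤ g i) (s : ℕ) : 0 ≤ conv f g s :=
  Finset.sum_nonneg fun i _ => mul_nonneg (hf i) (hg _)

lemma hasSum_conv (hF : HasSum f F) (hG : HasSum g G) : HasSum (conv f g) (F * G) := by
  have hnorm := summable_norm_sum_mul_range_of_summable_norm hF.summable.norm hG.summable.norm
  rw [← hF.tsum_eq, ← hG.tsum_eq, tsum_mul_tsum_eq_tsum_sum_range_of_summable_norm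
    hF.summable.norm hG.summable.norm]
  exact hnorm.of_norm.hasSum

lemma hasSum_conv2 {f₂ g₂ : ℕ → ℕ → ℝ} (hf : ∀ i, HasSum (f₂ i) (f i))
    (hg : ∀ i, HasSum (g₂ i) (g i)) (s : ℕ) : HasSum (conv2 f₂ g₂ s) (conv f g s) :=
  hasSum_sum (s := Finset.range (s + 1)) fun i _ => hasSum_conv (hf i) (hg (s - i))

lemma tendsto_mul_add_rpow (hf : Tendsto (fun t : ℕ => f t * (t : ℝ) ^ γ) atTop (𝓝 A)) (c : ℝ) :
    Tendsto (fun t : ℕ => f t * (t + c) ^ γ) atTop (𝓝 A) := by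
  have hlim := hf.mul ((tendsto_add_div_add c 0).rpow_const (p := γ) (Or.inl one_ne_zero))
  rw [Real.one_rpow, mul_one] at hlim
  refine hlim.congr' ?_
  filter_upwards [eventually_gt_atTop 0, tendsto_natCast_atTop_atTop.eventually_ge_atTop (-c)]
    with t ht htc
  have ht' : (0 : ℝ) < t := Nat.cast_pos.2 ht
  rw [add_zero, Real.div_rpow (by linarith) ht'.le, mul_assoc,
    mul_div_cancel₀ _ (Real.rpow_pos_of_pos ht' γ).ne']

lemma tendsto_sub_mul_rpow (hf : Tendsto (fun t : ℕ => f t * (t : ℝ) ^ γ) atTop (𝓝 A)) (i : ℕ) :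
    Tendsto (fun t : ℕ => f (t - i) * (t : ℝ) ^ γ) atTop (𝓝 A) := by
  refine ((tendsto_mul_add_rpow hf i).comp (tendsto_sub_atTop_nat i)).congr' ?_
  filter_upwards [eventually_ge_atTop i] with t ht
  simp only [Function.comp_apply, Nat.cast_sub ht, sub_add_cancel]

lemma tendsto_sum_range_mul_sub_mul_rpow (hγ : 0 ≤ γ) (hf : HasSum f F)
    (hh : Tendsto (fun t : ℕ => h t * (t : ℝ) ^ γ) atTop (𝓝 A)) {K : ℕ → ℕ}
    (hK : ∀ t, ∀ i < K t, 2 * i ≤ t) (hKtop : Tendsto K atTop atTop) :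
    Tendsto (fun t : ℕ => (∑ i ∈ Finset.range (K t), f i * h (t - i)) * (t : ℝ) ^ γ) atTop
      (𝓝 (F * A)) := by
  obtain ⟨C, hC⟩ := hh.abs.bddAbove_range
  have hC : ∀ t : ℕ, |h t * (t : ℝ) ^ γ| ≤ C := fun t => hC ⟨t, rfl⟩
  have hdom : ∀ t, ∀ i < K t, ‖f i * (h (t - i) * (t : ℝ) ^ γ)‖ ≤ ‖f i‖ * (2 ^ γ * C) := by
    intro t i hi
    have ht : (t : ℝ) ≤ 2 * (t - i : ℕ) := by
      have := hK t i hi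
      exact_mod_cast (by lia : t ≤ 2 * (t - i))
    have hCi := hC (t - i)
    rw [abs_mul, abs_of_nonneg (by positivity : 0 ≤ ((t - i : ℕ) : ℝ) ^ γ)] at hCi
    rw [norm_mul, norm_mul, Real.norm_eq_abs (h _),
      Real.norm_of_nonneg (by positivity : 0 ≤ (t : ℝ) ^ γ)]
    refine mul_le_mul_of_nonneg_left ?_ (norm_nonneg _)
    calc |h (t - i)| * (t : ℝ) ^ γ ≤ |h (t - i)| * (2 * (t - i : ℕ)) ^ γ := by gcongr
      _ = 2 ^ γ * (|h (t - i)| * ((t - i : ℕ) : ℝ) ^ γ) := by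
          rw [Real.mul_rpow zero_le_two (Nat.cast_nonneg _)]
          ring
      _ ≤ 2 ^ γ * C := by gcongr
  have hlim : Tendsto (fun t : ℕ => ∑' i, if i < K t then f i * (h (t - i) * (t : ℝ) ^ γ) else 0)
      atTop (𝓝 (∑' i, f i * A)) := by
    refine tendsto_tsum_of_dominated_convergence (hf.summable.norm.mul_right (2 ^ γ * C))
      (fun i => ?_) (Eventually.of_forall fun t i => ?_)
    · refine ((tendsto_sub_mul_rpow hh i).const_mul (f i)).congr' ?_
      filter_upwards [hKtop.eventually_gt_atTop i] with t ht
      rw [if_pos ht]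
    · split_ifs with hi
      · exact hdom t i hi
      · rw [norm_zero]
        have := (abs_nonneg _).trans (hC 0)
        positivity
  rw [tsum_mul_right, hf.tsum_eq] at hlim
  refine hlim.congr fun t => ?_
  rw [tsum_eq_sum (s := Finset.range (K t)) fun i hi => if_neg (by simpa using hi), Finset.sum_mul]
  refine Finset.sum_congr rfl fun i hi => ?_
  rw [if_pos (Finset.mem_range.1 hi), mul_assoc]

lemma conv_eq_sum_halves (f g : ℕ → ℝ) (t : ℕ) :
    conv f g t = ∑ i ∈ Finset.range (t / 2 + 1), f i * g (t - i) +
      ∑ i ∈ Finset.range (t - t / 2), g i * f (t - i) := by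
  have hhalf : t / 2 + 1 ≤ t + 1 := by lia
  have hreflect := Finset.sum_Ico_reflect (fun i => f i * g (t - i)) 0
    (m := t - t / 2) (n := t) (by lia)
  rw [show t + 1 - (t - t / 2) = t / 2 + 1 by lia, Nat.sub_zero, Nat.Ico_zero_eq_range] at hreflect
  rw [conv, ← Finset.sum_range_add_sum_Ico _ hhalf, ← hreflect]
  congr 1
  refine Finset.sum_congr rfl fun i hi => ?_
  rw [Nat.sub_sub_self ((Finset.mem_range.1 hi).le.trans (t.sub_le _)), mul_comm]

lemma tendsto_conv_mul_rpow (hγ : 0 ≤ γ) (hf : HasSum f F) (hg : HasSum g G)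
    (hfA : Tendsto (fun t : ℕ => f t * (t : ℝ) ^ γ) atTop (𝓝 A))
    (hgB : Tendsto (fun t : ℕ => g t * (t : ℝ) ^ γ) atTop (𝓝 B)) :
    Tendsto (fun t : ℕ => conv f g t * (t : ℝ) ^ γ) atTop (𝓝 (F * B + G * A)) := by
  refine ((tendsto_sum_range_mul_sub_mul_rpow hγ hf hgB (K := fun t => t / 2 + 1) (by lia)
    (tendsto_atTop_mono (fun t => (t / 2).le_succ) (Nat.tendsto_div_const_atTop two_ne_zero))).add
    (tendsto_sum_range_mul_sub_mul_rpow hγ hg hfA (K := fun t => t - t / 2) (by lia)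
    (tendsto_atTop_mono (fun t => (by lia : t / 2 ≤ t - t / 2))
      (Nat.tendsto_div_const_atTop two_ne_zero)))).congr fun t => ?_
  rw [← add_mul, conv_eq_sum_halves]

end Convolution

/-! ### Mixtures and compound Poisson distributions -/

section CompoundPoisson

variable {g w : ℕ → ℝ} {lam C K : ℝ}

lemma hasSum_tsum_mul {c : ℕ → ℝ} {k : ℕ → ℕ → ℝ} (hc : ∀ x, 0 ≤ c x) (hcs : Summable c)
    (hk : ∀ x s, 0 ≤ k x s) (hk1 : ∀ x, HasSum (k x) 1) :
    HasSum (fun s => ∑' x, c x * k x s) (∑' x, c x) := by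
  have hsum : Summable fun z : ℕ × ℕ => c z.1 * k z.1 z.2 := by
    refine (summable_prod_of_nonneg fun z => mul_nonneg (hc _) (hk _ _)).2
      ⟨fun x => (hk1 x).summable.mul_left (c x), ?_⟩
    simpa only [tsum_mul_left, (hk1 _).tsum_eq, mul_one] using hcs
  have hcomm : ∑' s, ∑' x, c x * k x s = ∑' x, c x := by
    rw [Summable.tsum_comm (f := fun x s => c x * k x s) hsum]
    simp only [tsum_mul_left, (hk1 _).tsum_eq, mul_one]
  exact hcomm ▸ hsum.prod_symm.prod.hasSum

lemma convPow_nonneg (hg : ∀ s, 0 ≤ g s) (j s : ℕ) : 0 ≤ convPow g j s := by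
  induction j generalizing s with
  | zero =>
    rw [convPow]
    positivity
  | succ j ih => exact conv_nonneg hg ih s

lemma hasSum_convPow (hg : HasSum g 1) (j : ℕ) : HasSum (convPow g j) 1 := by
  induction j with
  | zero => exact hasSum_ite_eq 0 1
  | succ j ih => exact mul_one (1 : ℝ) ▸ hasSum_conv hg ih

lemma cpoi_nonneg (hlam : 0 ≤ lam) (hg : ∀ s, 0 ≤ g s) (s : ℕ) : 0 ≤ cpoi lam g s :=
  tsum_nonneg fun j => mul_nonneg (by positivity) (convPow_nonneg hg j s)

lemma hasSum_cpoi (hlam : 0 ≤ lam) (hg : ∀ s, 0 ≤ g s) (hg1 : HasSum g 1) :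
    HasSum (cpoi lam g) 1 := by
  have hpoi := hasSum_one_poissonMeasure ⟨lam, hlam⟩
  exact hpoi.tsum_eq ▸ hasSum_tsum_mul (fun j => by positivity) hpoi.summable
    (convPow_nonneg hg) (hasSum_convPow hg1)

lemma convPow_le_of_conv_le (hw : ∀ s, 0 ≤ w s) (hw0 : 1 ≤ w 0)
    (hC : ∀ s, conv w w s ≤ C * w s) (hg : ∀ s, 0 ≤ g s) (hK : ∀ s, g s ≤ K * w s) (j s : ℕ) :
    convPow g j s ≤ (K * C) ^ j * w s := by
  have hK0 : 0 ≤ K := nonneg_of_mul_nonneg_left ((hg 0).trans (hK 0)) (by linarith)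
  have hC0 : 0 ≤ C := nonneg_of_mul_nonneg_left ((conv_nonneg hw hw 0).trans (hC 0)) (by linarith)
  induction j generalizing s with
  | zero =>
    rw [pow_zero, one_mul]
    simp only [convPow]
    split_ifs with hs
    exacts [hs ▸ hw0, hw s]
  | succ j ih => calc
      convPow g (j + 1) s ≤ ∑ i ∈ Finset.range (s + 1), K * w i * ((K * C) ^ j * w (s - i)) :=
        Finset.sum_le_sum (s := Finset.range (s + 1)) fun i _ => mul_le_mul (hK i) (ih (s - i))
          (convPow_nonneg hg _ _) (mul_nonneg hK0 (hw i))
      _ = K * (K * C) ^ j * conv w w s := by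
        rw [conv, Finset.mul_sum]
        exact Finset.sum_congr rfl fun i _ => by ring
      _ ≤ K * (K * C) ^ j * (C * w s) := by
        gcongr
        exact hC s
      _ = (K * C) ^ (j + 1) * w s := by ring

lemma cpoi_le_of_conv_le (hlam : 0 ≤ lam) (hw : ∀ s, 0 ≤ w s) (hw0 : 1 ≤ w 0)
    (hC : ∀ s, conv w w s ≤ C * w s) (hg : ∀ s, 0 ≤ g s) (hK : ∀ s, g s ≤ K * w s) (s : ℕ) :
    cpoi lam g s ≤ Real.exp (-lam) * Real.exp (lam * (K * C)) * w s := by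
  have hexp : HasSum (fun j : ℕ => Real.exp (-lam) * ((lam * (K * C)) ^ j / j.factorial) * w s)
      (Real.exp (-lam) * Real.exp (lam * (K * C)) * w s) := by
    rw [Real.exp_eq_exp_ℝ]
    exact ((NormedSpace.expSeries_div_hasSum_exp (lam * (K * C))).mul_left _).mul_right _
  have hle : ∀ j : ℕ, Real.exp (-lam) * lam ^ j / j.factorial * convPow g j s ≤
      Real.exp (-lam) * ((lam * (K * C)) ^ j / j.factorial) * w s := fun j => calc
    _ ≤ Real.exp (-lam) * lam ^ j / j.factorial * ((K * C) ^ j * w s) := by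
      gcongr
      exact convPow_le_of_conv_le hw hw0 hC hg hK j s
    _ = _ := by rw [mul_pow lam]; ring
  have hsum := Summable.of_nonneg_of_le
    (fun j => mul_nonneg (by positivity) (convPow_nonneg hg j s)) hle hexp.summable
  exact hasSum_le hle hsum.hasSum hexp

/-- The weight `(s + 1) ^ (-θ)`. For `θ > 1` it is subconvolutive, which makes it a majorant that is
stable under passing to a compound Poisson distribution. -/
def polyWeight (θ : ℝ) (s : ℕ) : ℝ := ((s : ℝ) + 1) ^ (-θ)

lemma polyWeight_pos (θ : ℝ) (s : ℕ) : 0 < polyWeight θ s := by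
  unfold polyWeight
  positivity

lemma polyWeight_mul_rpow (θ : ℝ) (s : ℕ) : polyWeight θ s * ((s : ℝ) + 1) ^ θ = 1 := by
  rw [polyWeight, ← Real.rpow_add (by positivity), neg_add_cancel, Real.rpow_zero]

lemma summable_polyWeight {θ : ℝ} (hθ : 1 < θ) : Summable (polyWeight θ) := by
  have h := (summable_nat_add_iff 1).2 (Real.summable_nat_rpow.2 (neg_lt_neg hθ))
  simp only [Nat.cast_add_one] at h
  exact h

lemma polyWeight_le_of_le_two_mul {θ : ℝ} (hθ : 0 ≤ θ) {s j : ℕ} (h : s ≤ 2 * j) :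
    polyWeight θ j ≤ 2 ^ θ * polyWeight θ s := by
  have h' : (s : ℝ) ≤ 2 * j := by exact_mod_cast h
  calc polyWeight θ j ≤ ((s + 1) / 2) ^ (-θ) :=
        Real.rpow_le_rpow_of_nonpos (by positivity) (by linarith) (neg_nonpos.2 hθ)
    _ = 2 ^ θ * polyWeight θ s := by
        rw [Real.div_rpow (by positivity) zero_le_two, Real.rpow_neg zero_le_two, div_inv_eq_mul,
          mul_comm, polyWeight]

lemma conv_polyWeight_le {θ : ℝ} (hθ : 1 < θ) (s : ℕ) :
    conv (polyWeight θ) (polyWeight θ) s ≤ 2 ^ θ * (2 * ∑' i, polyWeight θ i) * polyWeight θ s := by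
  have hpos := polyWeight_pos θ
  have hθ0 : 0 ≤ θ := by linarith
  have hterm : ∀ i, polyWeight θ i * polyWeight θ (s - i) ≤
      2 ^ θ * polyWeight θ s * (polyWeight θ i + polyWeight θ (s - i)) := fun i => by
    have hw : 0 ≤ 2 ^ θ * polyWeight θ s := mul_nonneg (by positivity) (hpos s).le
    rcases le_total s (2 * i) with hsi | hsi
    · nlinarith [polyWeight_le_of_le_two_mul hθ0 hsi, hpos i, hpos (s - i)]
    · have hsi' : s ≤ 2 * (s - i) := by lia
      nlinarith [polyWeight_le_of_le_two_mul hθ0 hsi', hpos i, hpos (s - i)]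
  have hreflect : ∑ i ∈ Finset.range (s + 1), polyWeight θ (s - i) =
      ∑ i ∈ Finset.range (s + 1), polyWeight θ i := by
    simpa using Finset.sum_range_reflect (polyWeight θ) (s + 1)
  calc conv (polyWeight θ) (polyWeight θ) s
      ≤ 2 ^ θ * polyWeight θ s * (2 * ∑ i ∈ Finset.range (s + 1), polyWeight θ i) := by
        refine (Finset.sum_le_sum fun i _ => hterm i).trans_eq ?_
        rw [← Finset.mul_sum, Finset.sum_add_distrib, hreflect, two_mul]
    _ ≤ 2 ^ θ * polyWeight θ s * (2 * ∑' i, polyWeight θ i) := by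
        have := (hpos s).le
        gcongr
        exact (summable_polyWeight hθ).sum_le_tsum _ fun i _ => (hpos i).le
    _ = _ := by ring

theorem tendsto_cpoi_mul_rpow_zero {γ A : ℝ} (hlam : 0 ≤ lam) (hγ : 0 < γ) (hg : ∀ s, 0 ≤ g s)
    (hgA : Tendsto (fun s : ℕ => g s * (s : ℝ) ^ (γ + 1)) atTop (𝓝 A)) :
    Tendsto (fun t : ℕ => cpoi lam g t * (t : ℝ) ^ γ) atTop (𝓝 0) := by
  obtain ⟨K, hK⟩ := (tendsto_mul_add_rpow hgA 1).bddAbove_range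
  have hgK : ∀ s, g s ≤ K * polyWeight (γ + 1) s := fun s => calc
    g s = g s * ((s : ℝ) + 1) ^ (γ + 1) * polyWeight (γ + 1) s := by
      rw [mul_assoc, mul_comm (_ ^ _), polyWeight_mul_rpow, mul_one]
    _ ≤ K * polyWeight (γ + 1) s :=
      mul_le_mul_of_nonneg_right (hK ⟨s, rfl⟩) (polyWeight_pos _ s).le
  have hcpoi := cpoi_le_of_conv_le hlam (fun s => (polyWeight_pos (γ + 1) s).le)
    (by simp [polyWeight]) (conv_polyWeight_le (by linarith)) hg hgK
  generalize Real.exp (-lam) * Real.exp _ = D at hcpoi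
  have hlim : Tendsto (fun t : ℕ => D * (1 / ((t : ℝ) + 1))) atTop (𝓝 0) := by
    simpa using tendsto_one_div_add_atTop_nhds_zero_nat.const_mul D
  refine squeeze_zero (fun t => mul_nonneg (cpoi_nonneg hlam hg t) (by positivity))
    (fun t => ?_) hlim
  calc cpoi lam g t * (t : ℝ) ^ γ ≤ cpoi lam g t * ((t : ℝ) + 1) ^ γ := by
        have := cpoi_nonneg hlam hg t
        gcongr
        linarith
    _ ≤ D * polyWeight (γ + 1) t * ((t : ℝ) + 1) ^ γ := by
        gcongr
        exact hcpoi t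
    _ = D * (1 / ((t : ℝ) + 1)) := by
        rw [polyWeight, mul_assoc, ← Real.rpow_add (by positivity), one_div, ← Real.rpow_neg_one]
        congr 2
        ring

end CompoundPoisson

/-! ### Power-law success probabilities -/

section PowerLaw

variable {b β c : ℝ}

lemma tendsto_relative_decrement_add_rpow_neg (hc : 0 < c) (β : ℝ) :
    Tendsto (fun n : ℕ => ((n : ℝ) + 1) * (((n : ℝ) + c) ^ (-β) - ((n + 1 : ℕ) + c) ^ (-β)) /
      ((n : ℝ) + c) ^ (-β)) atTop (𝓝 β) := by
  have hderiv : HasDerivAt (fun u : ℝ => -(u ^ (-β))) β 1 := by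
    simpa using (Real.hasDerivAt_rpow_const (x := 1) (p := -β) (Or.inl one_ne_zero)).fun_neg
  have hu : Tendsto (fun n : ℕ => ((n + 1 : ℕ) + c) / ((n : ℝ) + c)) atTop (𝓝[≠] 1) := by
    refine tendsto_nhdsWithin_iff.2 ⟨?_, Eventually.of_forall fun n => ?_⟩
    · simpa only [Nat.cast_add_one, add_assoc] using tendsto_add_div_add (1 + c) c
    · rw [Set.mem_compl_singleton_iff, Ne, div_eq_one_iff_eq (by positivity)]
      simp
  have hlim := (tendsto_add_div_add 1 c).mul (hderiv.tendsto_slope.comp hu)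
  rw [one_mul] at hlim
  refine hlim.congr fun n => ?_
  have hn : 0 < (n : ℝ) + c := by positivity
  have hu1 : ((n + 1 : ℕ) + c) / ((n : ℝ) + c) - 1 = 1 / (n + c) := by
    rw [div_sub_one hn.ne']
    push_cast
    ring_nf
  rw [Function.comp_apply, slope_def_field, hu1, Real.div_rpow (by positivity) hn.le,
    Real.one_rpow]
  have := Real.rpow_pos_of_pos hn (-β)
  field_simp
  ring

lemma exists_tendsto_mul_add_rpow_neg (hβ0 : 0 ≤ β) (hb1 : β = 0 → b < 1) (c : ℝ) :
    ∃ ℓ < 1, β * ℓ = 0 ∧ Tendsto (fun n : ℕ => b * ((n : ℝ) + c) ^ (-β)) atTop (𝓝 ℓ) := by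
  rcases hβ0.eq_or_lt with rfl | hβ
  · exact ⟨b, hb1 rfl, zero_mul b, by simp⟩
  · refine ⟨0, one_pos, mul_zero β, ?_⟩
    simpa using ((tendsto_rpow_neg_atTop hβ).comp
      (tendsto_atTop_add_const_right _ c tendsto_natCast_atTop_atTop)).const_mul b

lemma eventually_min_one_mul_add_rpow_neg_eq (hβ0 : 0 ≤ β) (hb1 : β = 0 → b < 1) (c : ℝ) :
    ∀ᶠ n : ℕ in atTop, min 1 (b * ((n : ℝ) + c) ^ (-β)) = b * ((n : ℝ) + c) ^ (-β) := by
  obtain ⟨ℓ, hℓ1, -, hlim⟩ := exists_tendsto_mul_add_rpow_neg hβ0 hb1 c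
  exact (hlim.eventually_lt_const hℓ1).mono fun n hn => min_eq_right hn.le

lemma tendsto_mul_mul_add_rpow_neg_atTop (hb : 0 < b) (hβ1 : β < 1) (hc : 0 < c) :
    Tendsto (fun n : ℕ => n * (b * ((n : ℝ) + c) ^ (-β))) atTop atTop := by
  have hpow : Tendsto (fun n : ℕ => ((n : ℝ) + c) ^ (1 - β)) atTop atTop :=
    (tendsto_rpow_atTop (sub_pos.2 hβ1)).comp
      (tendsto_atTop_add_const_right _ c tendsto_natCast_atTop_atTop)
  refine ((tendsto_add_div_add 0 c).pos_mul_atTop one_pos (hpow.const_mul_atTop hb)).congr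
    fun n => ?_
  have hn : 0 < (n : ℝ) + c := by positivity
  rw [sub_eq_add_neg, Real.rpow_add hn, Real.rpow_one]
  field_simp
  ring

theorem regularlyDecaying_min_one_mul_rpow (hb : 0 < b) (hβ0 : 0 ≤ β) (hβ1 : β < 1)
    (hb1 : β = 0 → b < 1) (hc : 0 < c) :
    RegularlyDecaying (fun n : ℕ => min 1 (b * ((n : ℝ) + c) ^ (-β))) β := by
  obtain ⟨ℓ, hℓ1, hβℓ, hlim⟩ := exists_tendsto_mul_add_rpow_neg hβ0 hb1 c
  have hmin := eventually_min_one_mul_add_rpow_neg_eq hβ0 hb1 c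
  have hlim' := hlim.congr' (hmin.mono fun n hn => hn.symm)
  have hpos : ∀ n : ℕ, 0 < min 1 (b * ((n : ℝ) + c) ^ (-β)) := fun n => by positivity
  have hratio : Tendsto (fun n : ℕ => ((n : ℝ) + 1) * (min 1 (b * ((n : ℝ) + c) ^ (-β)) -
      min 1 (b * (((n + 1 : ℕ) : ℝ) + c) ^ (-β))) / min 1 (b * ((n : ℝ) + c) ^ (-β)))
      atTop (𝓝 β) := by
    refine (tendsto_relative_decrement_add_rpow_neg hc β).congr' ?_
    filter_upwards [hmin, (tendsto_add_atTop_nat 1).eventually hmin] with n hn hn'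
    rw [hn, hn', ← mul_sub, mul_left_comm, mul_div_mul_left _ _ hb.ne']
  refine ⟨hpos, fun n => min_le_left _ _, fun m n hmn => ?_, hratio, ?_, ?_, ?_⟩
  · refine min_le_min_left _ (mul_le_mul_of_nonneg_left ?_ hb.le)
    exact Real.rpow_le_rpow_of_nonpos (by positivity) (by gcongr) (neg_nonpos.2 hβ0)
  · obtain ⟨d, hℓd, hd⟩ := exists_between hℓ1
    exact ⟨d, hd, hlim'.eventually_le_const hℓd⟩
  · have h := hratio.mul hlim'
    rw [hβℓ] at h
    exact h.congr fun n => div_mul_cancel₀ _ (hpos n).ne'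
  · refine (tendsto_mul_mul_add_rpow_neg_atTop hb hβ1 hc).congr' ?_
    filter_upwards [hmin] with n hn
    rw [hn]

end PowerLaw
/-! ### The limiting bidegree distribution -/

section Bidegree

variable {mu : ℝ} {p q : ℕ → ℝ}

-- A divergent series has the junk value `0`, so a nonzero moment is automatically finite.
lemma hasSum_mom {r s : ℕ} (h : mom p q r s ≠ 0) :
    HasSum (fun x : ℕ => (x.descFactorial r : ℝ) * q x ^ s * p x) (mom p q r s) := by
  refine Summable.hasSum ?_
  contrapose! h
  exact tsum_eq_zero_of_not_summable h

/-- The mass function of `D₁'`, the first marginal of `f2p`. -/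
def f2pMarginal (p q : ℕ → ℝ) (s : ℕ) : ℝ :=
  (∑' x : ℕ, (x.descFactorial 2 : ℝ) * q x * p x * binP (x - 2) (q x) s) / mom p q 2 1

lemma gInc_succ (h : mom p q 2 1 ≠ 0) (k : ℕ) :
    gInc p q (k + 1) = mom p q 2 1 / mom p q 1 0 * (f2pMarginal p q k / (k + 1)) := by
  have hterm : ∀ x : ℕ, (x : ℝ) * binP (x - 1) (q x) (k + 1) * p x =
      (x.descFactorial 2 : ℝ) * q x * p x * binP (x - 2) (q x) k / (k + 1)
    | 0 => by simp
    | 1 => by simp [binP]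
    | n + 2 => by
      rw [eq_div_iff (by positivity), Nat.add_sub_cancel, show n + 2 - 1 = n + 1 by lia]
      simp only [Nat.succ_descFactorial_succ, Nat.descFactorial_zero]
      push_cast
      linear_combination ((n : ℝ) + 2) * p (n + 2) * succ_mul_binP_succ n k (q (n + 2))
  rw [gInc, tsum_congr hterm, tsum_div_const, f2pMarginal]
  field_simp

lemma hasSum_delta11 (s : ℕ) : HasSum (delta11 s) (if s = 1 then 1 else 0) := by
  have hrow : delta11 s = fun t => if t = 1 then (if s = 1 then 1 else 0) else 0 := by
    ext t
    simp only [delta11, ← ite_and, and_comm]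
  exact hrow ▸ hasSum_ite_eq 1 _

variable (hp : ∀ x, 0 ≤ p x) (hq : ∀ x, q x ∈ Set.Icc (0 : ℝ) 1)
include hp hq

lemma descFactorial_mul_pow_mul_nonneg (r s x : ℕ) :
    0 ≤ (x.descFactorial r : ℝ) * q x ^ s * p x := by
  have := (hq x).1
  have := hp x
  positivity

lemma mom_nonneg (r s : ℕ) : 0 ≤ mom p q r s :=
  tsum_nonneg (descFactorial_mul_pow_mul_nonneg hp hq r s)

lemma gInc_nonneg (s : ℕ) : 0 ≤ gInc p q s :=
  div_nonneg (tsum_nonneg fun x => mul_nonneg (mul_nonneg x.cast_nonneg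
    (binP_nonneg (hq x) _ _)) (hp x)) (mom_nonneg hp hq 1 0)

lemma hasSum_gInc (h : mom p q 1 0 ≠ 0) : HasSum (gInc p q) 1 := by
  have hmix := (hasSum_tsum_mul (descFactorial_mul_pow_mul_nonneg hp hq 1 0)
    (hasSum_mom h).summable (fun x s => binP_nonneg (hq x) (x - 1) s)
    fun x => hasSum_binP _ _).div_const (mom p q 1 0)
  rw [(hasSum_mom h).tsum_eq, div_self h] at hmix
  refine hmix.congr_fun fun s => ?_
  simp only [gInc, Nat.descFactorial_one, pow_zero, mul_one, mul_right_comm]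

lemma hasSum_f2pMarginal (h : mom p q 2 1 ≠ 0) : HasSum (f2pMarginal p q) 1 := by
  have hmix := (hasSum_tsum_mul (descFactorial_mul_pow_mul_nonneg hp hq 2 1)
    (hasSum_mom h).summable (fun x s => binP_nonneg (hq x) (x - 2) s)
    fun x => hasSum_binP _ _).div_const (mom p q 2 1)
  rw [(hasSum_mom h).tsum_eq, div_self h] at hmix
  simp only [pow_one] at hmix
  exact hmix

lemma hasSum_f2p (h : mom p q 2 1 ≠ 0) (s : ℕ) :
    HasSum (f2p p q s) (f2pMarginal p q s) := by
  have hw : ∀ x : ℕ, 0 ≤ (x.descFactorial 2 : ℝ) * q x * p x := by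
    simpa only [pow_one] using descFactorial_mul_pow_mul_nonneg hp hq 2 1
  have hsum : Summable fun x : ℕ => (x.descFactorial 2 : ℝ) * q x * p x := by
    simpa only [pow_one] using (hasSum_mom h).summable
  have hB := fun x => binP_nonneg (hq x) (x - 2)
  have hmix := (hasSum_tsum_mul (fun x => mul_nonneg (hw x) (hB x s))
    (hsum.of_nonneg_of_le (fun x => mul_nonneg (hw x) (hB x s))
      fun x => mul_le_of_le_one_right (hw x) (binP_le_one (hq x) _ s))
    hB fun x => hasSum_binP _ _).div_const (mom p q 2 1)
  refine hmix.congr_fun fun t => ?_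
  rw [f2p]
  congr 1
  exact tsum_congr fun x => by ring

lemma hasSum_barf1 (hmu : 0 ≤ mu) (h : mom p q 1 0 ≠ 0) : HasSum (barf1 mu p q) 1 :=
  hasSum_cpoi (mul_nonneg hmu (mom_nonneg hp hq 1 0)) (gInc_nonneg hp hq) (hasSum_gInc hp hq h)

lemma hasSum_barf2 (hmu : 0 ≤ mu) (h10 : mom p q 1 0 ≠ 0) (h21 : mom p q 2 1 ≠ 0) (s : ℕ) :
    HasSum (barf2 mu p q s)
      (conv (conv (fun s => if s = 1 then 1 else 0) (barf1 mu p q)) (f2pMarginal p q) s) := by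
  have hprod : ∀ i, HasSum (fun t => barf1 mu p q i * barf1 mu p q t) (barf1 mu p q i) :=
    fun i => by simpa only [mul_one] using (hasSum_barf1 hp hq hmu h10).mul_left (barf1 mu p q i)
  exact hasSum_conv2 (hasSum_conv2 hasSum_delta11 hprod) (hasSum_f2p hp hq h21) s

lemma tendsto_barf1_mul_rpow_zero {γ A : ℝ} (hmu : 0 ≤ mu) (h21 : mom p q 2 1 ≠ 0) (hγ : 0 < γ)
    (hf : Tendsto (fun t : ℕ => f2pMarginal p q t * (t : ℝ) ^ γ) atTop (𝓝 A)) :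
    Tendsto (fun t : ℕ => barf1 mu p q t * (t : ℝ) ^ γ) atTop (𝓝 0) := by
  refine tendsto_cpoi_mul_rpow_zero (A := mom p q 2 1 / mom p q 1 0 * A)
    (mul_nonneg hmu (mom_nonneg hp hq 1 0)) hγ (gInc_nonneg hp hq)
    ((tendsto_add_atTop_iff_nat 1).1 ?_)
  refine ((tendsto_mul_add_rpow hf 1).const_mul (mom p q 2 1 / mom p q 1 0)).congr fun k => ?_
  rw [gInc_succ h21, Nat.cast_add_one, Real.rpow_add_one (by positivity)]
  field_simp

theorem tendsto_tsum_barf2_mul_rpow {γ A : ℝ} (hmu : 0 ≤ mu) (h10 : mom p q 1 0 ≠ 0)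
    (h21 : mom p q 2 1 ≠ 0) (hγ : 0 < γ)
    (hf : Tendsto (fun t : ℕ => f2pMarginal p q t * (t : ℝ) ^ γ) atTop (𝓝 A)) :
    Tendsto (fun t : ℕ => (∑' u, barf2 mu p q t u) * (t : ℝ) ^ γ) atTop (𝓝 A) := by
  have hδ1 : HasSum (fun s : ℕ => if s = 1 then (1 : ℝ) else 0) 1 := hasSum_ite_eq 1 1
  have hδ : Tendsto (fun s : ℕ => (if s = 1 then (1 : ℝ) else 0) * (s : ℝ) ^ γ) atTop (𝓝 0) := by
    refine tendsto_const_nhds.congr' ?_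
    filter_upwards [eventually_gt_atTop 1] with s hs
    rw [if_neg hs.ne', zero_mul]
  have hb1 := hasSum_barf1 hp hq hmu h10
  have hlim := tendsto_conv_mul_rpow hγ.le (hasSum_conv hδ1 hb1) (hasSum_f2pMarginal hp hq h21)
    (tendsto_conv_mul_rpow hγ.le hδ1 hb1 hδ (tendsto_barf1_mul_rpow_zero hp hq hmu h21 hγ hf)) hf
  simp only [mul_one, one_mul, add_zero] at hlim
  exact hlim.congr fun t => by rw [(hasSum_barf2 hp hq hmu h10 h21 t).tsum_eq]

end Bidegree

section PowerLawLayers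

variable {p q : ℕ → ℝ} {a b α β γ A : ℝ}

theorem tendsto_f2pMarginal_mul_rpow (hQ : RegularlyDecaying (fun n => q (n + 2)) β) (hβ : β < 1)
    (hγ : 0 ≤ γ) (hF : Tendsto (fun n : ℕ => ((n + 2).descFactorial 2 * p (n + 2)) *
      (n * q (n + 2)) ^ γ) atTop (𝓝 A)) :
    Tendsto (fun t : ℕ => f2pMarginal p q t * (t : ℝ) ^ γ) atTop
      (𝓝 (A * (1 - β)⁻¹ * (mom p q 2 1)⁻¹)) := by
  refine ((hQ.tendsto_tsum_mul_binWeight hβ hγ hF).mul_const (mom p q 2 1)⁻¹).congr fun t => ?_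
  have hshift := tsum_nat_add_of_eq_zero (N := 2)
    (w := fun x => (x.descFactorial 2 : ℝ) * q x * p x * binP (x - 2) (q x) t) fun n hn => by
      simp only [Nat.descFactorial_of_lt hn, Nat.cast_zero, zero_mul]
  rw [f2pMarginal, ← hshift, div_eq_mul_inv, mul_right_comm]
  congr 3
  ext n
  rw [binWeight, Nat.add_sub_cancel]
  ring

lemma tendsto_descFactorial_two_mul_rpow (hb : 0 < b) (hγ : (1 - β) * γ = α - 2)
    (hp : Tendsto (fun x : ℕ => p x * (x : ℝ) ^ α) atTop (𝓝 a))
    (hq : ∀ᶠ n : ℕ in atTop, q (n + 2) = b * ((n : ℝ) + 2) ^ (-β)) :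
    Tendsto (fun n : ℕ => ((n + 2).descFactorial 2 * p (n + 2)) * (n * q (n + 2)) ^ γ) atTop
      (𝓝 (a * b ^ γ)) := by
  have hlim := (((hp.comp (tendsto_add_atTop_nat 2)).mul (tendsto_add_div_add 1 2)).mul
    ((tendsto_add_div_add 0 2).rpow_const (p := γ) (Or.inl one_ne_zero))).mul_const (b ^ γ)
  rw [Real.one_rpow, mul_one, mul_one] at hlim
  refine hlim.congr' ?_
  filter_upwards [hq] with n hn
  have hx : 0 < (n : ℝ) + 2 := by positivity
  have hαγ : ((n : ℝ) + 2) ^ α = (n + 2) ^ 2 * ((n + 2) ^ γ * ((n + 2) ^ (-β)) ^ γ) := by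
    rw [← Real.rpow_mul hx.le, ← Real.rpow_add hx, ← Real.rpow_natCast, ← Real.rpow_add hx]
    congr 1
    push_cast
    linarith
  rw [hn, Function.comp_apply, Nat.cast_add, Nat.cast_two, hαγ, add_zero,
    Real.div_rpow n.cast_nonneg hx.le, Real.mul_rpow n.cast_nonneg (by positivity),
    Real.mul_rpow hb.le (by positivity)]
  simp only [Nat.succ_descFactorial_succ, Nat.descFactorial_zero]
  push_cast
  field_simp
  ring

lemma summable_descFactorial_mul_pow_mul {r s : ℕ}
    (hp : p =O[atTop] fun x : ℕ => (x : ℝ) ^ (-α)) (hq : q =O[atTop] fun x : ℕ => (x : ℝ) ^ (-β))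
    (h : r - β * s - α < -1) :
    Summable fun x : ℕ => (x.descFactorial r : ℝ) * q x ^ s * p x := by
  have hr : (fun x : ℕ => (x.descFactorial r : ℝ)) =O[atTop] fun x : ℕ => (x : ℝ) ^ r :=
    Asymptotics.isBigO_of_le _ fun x => by
      rw [Real.norm_of_nonneg (by positivity), Real.norm_of_nonneg (by positivity)]
      exact_mod_cast Nat.descFactorial_le_pow x r
  refine summable_of_isBigO_nat (Real.summable_nat_rpow.2 h)
    (((hr.mul (hq.pow s)).mul hp).congr' EventuallyEq.rfl ?_)
  filter_upwards [eventually_gt_atTop 0] with x hx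
  have hx' : (0 : ℝ) < x := Nat.cast_pos.2 hx
  rw [← Real.rpow_mul_natCast hx'.le, ← Real.rpow_natCast, ← Real.rpow_add hx', ← Real.rpow_add hx']
  congr 1
  ring

lemma isBigO_rpow_neg_of_tendsto (hp : Tendsto (fun x : ℕ => p x * (x : ℝ) ^ α) atTop (𝓝 a)) :
    p =O[atTop] fun x : ℕ => (x : ℝ) ^ (-α) := by
  refine ((hp.isBigO_one ℝ).mul (Asymptotics.isBigO_refl (fun x : ℕ => (x : ℝ) ^ (-α)) _)).congr'
    ?_ (Eventually.of_forall fun x => one_mul _)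
  filter_upwards [eventually_gt_atTop 0] with x hx
  rw [mul_assoc, ← Real.rpow_add (Nat.cast_pos.2 hx), add_neg_cancel, Real.rpow_zero, mul_one]

lemma min_one_mul_rpow_mem_Icc (hb : 0 ≤ b) (β : ℝ) (x : ℕ) :
    min 1 (b * (x : ℝ) ^ (-β)) ∈ Set.Icc (0 : ℝ) 1 :=
  ⟨by positivity, min_le_left _ _⟩

lemma mom_pos_of_powerLaw (ha : 0 < a) (hb : 0 < b) (hp : ∀ x, 0 ≤ p x)
    (hptail : Tendsto (fun x : ℕ => p x * (x : ℝ) ^ α) atTop (𝓝 a))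
    (hq : ∀ x : ℕ, q x = min 1 (b * (x : ℝ) ^ (-β))) {r s : ℕ} (h : r - β * s - α < -1) :
    0 < mom p q r s := by
  have hqO : q =O[atTop] fun x : ℕ => (x : ℝ) ^ (-β) :=
    Asymptotics.IsBigO.of_bound b (Eventually.of_forall fun x => by
      rw [Real.norm_of_nonneg (by rw [hq]; positivity), Real.norm_of_nonneg (by positivity), hq]
      exact min_le_right _ _)
  obtain ⟨x, hx, hrx, hx0⟩ := ((hptail.eventually_const_lt ha).and
    ((eventually_ge_atTop r).and (eventually_gt_atTop 0))).exists
  have hpx : 0 < p x := pos_of_mul_pos_left hx (by positivity)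
  have hqx : 0 < q x := by
    rw [hq]
    positivity
  have hnonneg := descFactorial_mul_pow_mul_nonneg hp
    (fun x => hq x ▸ min_one_mul_rpow_mem_Icc hb.le β x) r s
  refine (summable_descFactorial_mul_pow_mul (isBigO_rpow_neg_of_tendsto hptail) hqO h).tsum_pos
    hnonneg x ?_
  have := Nat.descFactorial_pos.2 hrx
  positivity

theorem tendsto_f2pMarginal_mul_rpow_of_powerLaw (hb : 0 < b) (hβ0 : 0 ≤ β) (hβ1 : β < 1)
    (hb1 : β = 0 → b < 1) (hptail : Tendsto (fun x : ℕ => p x * (x : ℝ) ^ α) atTop (𝓝 a))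
    (hq : ∀ x : ℕ, q x = min 1 (b * (x : ℝ) ^ (-β))) (hγ : 0 ≤ γ)
    (hγα : (1 - β) * γ = α - 2) :
    Tendsto (fun t : ℕ => f2pMarginal p q t * (t : ℝ) ^ γ) atTop
      (𝓝 (a * b ^ γ * (1 - β)⁻¹ * (mom p q 2 1)⁻¹)) := by
  have hq2 : ∀ n : ℕ, q (n + 2) = min 1 (b * ((n : ℝ) + 2) ^ (-β)) := fun n => by
    rw [hq, Nat.cast_add, Nat.cast_two]
  have hQ : RegularlyDecaying (fun n => q (n + 2)) β := by
    simpa only [hq2] using regularlyDecaying_min_one_mul_rpow hb hβ0 hβ1 hb1 two_pos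
  refine tendsto_f2pMarginal_mul_rpow hQ hβ1 hγ
    (tendsto_descFactorial_two_mul_rpow hb hγα hptail ?_)
  simpa only [hq2] using eventually_min_one_mul_add_rpow_neg_eq hβ0 hb1 2

end PowerLawLayers

/-- **Theorem 2, eq. (5)** (Bloznelis–Karjalainen–Leskelä). Under the power-law layer type
distribution `P(dx,dy) = p(dx) δ_{q(x)}(dy)` with `p(x) = (a+o(1)) x^{-α}` and
`q(x) = min{1, b x^{-β}}`, the marginal of the limiting bidegree distribution satisfies
`P(D₁* = t) = (1+o(1)) c' t^{-(α-2)/(1-β)}` with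
`c' = a b^{(α-2)/(1-β)} (1-β)⁻¹ P₂₁⁻¹`. -/
theorem barf2_marginal_tail
    (mu a b α β : ℝ) (hmu : 0 < mu) (ha : 0 < a) (hb : 0 < b)
    (hα : 2 < α) (hβ0 : 0 ≤ β) (hβ1 : β < 1) (hαβ : 3 < α + β)
    (hb1 : β = 0 → b < 1)
    (p : ℕ → ℝ) (hpnn : ∀ x, 0 ≤ p x) (hpsum : HasSum p 1)
    (hptail : Tendsto (fun x : ℕ => p x * (x : ℝ) ^ α) atTop (𝓝 a))
    (q : ℕ → ℝ) (hq : ∀ x : ℕ, q x = min 1 (b * (x : ℝ) ^ (-β))) :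
    Tendsto (fun t : ℕ => (∑' u : ℕ, barf2 mu p q t u) * (t : ℝ) ^ ((α - 2) / (1 - β)))
      atTop (𝓝 (a * b ^ ((α - 2) / (1 - β)) * (1 - β)⁻¹ * (mom p q 2 1)⁻¹)) := by
  have hβ : 0 < 1 - β := sub_pos.2 hβ1
  have h10 : 0 < mom p q 1 0 :=
    mom_pos_of_powerLaw ha hb hpnn hptail hq (by push_cast; linarith)
  have h21 : 0 < mom p q 2 1 :=
    mom_pos_of_powerLaw ha hb hpnn hptail hq (by push_cast; linarith)
  have hγ : 0 < (α - 2) / (1 - β) := div_pos (sub_pos.2 hα) hβ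
  exact tendsto_tsum_barf2_mul_rpow hpnn (fun x => hq x ▸ min_one_mul_rpow_mem_Icc hb.le β x)
    hmu.le h10.ne' h21.ne' hγ (tendsto_f2pMarginal_mul_rpow_of_powerLaw hb hβ0 hβ1 hb1 hptail hq
      hγ.le (mul_div_cancel₀ _ hβ.ne'))
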